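/- Well-formedness of rounding: for every triple (y, m, d) with 1 ≤ m ≤ 12 and d ≥ 1, and every rounding mode r ∈ {↓, ↑}, the value rnd_r(y, m, d) is a valid date. -/

import Mathlib

/-- A value is either a date `(y, m, d)` (a triple of integers in the
Gregorian calendar) or the error element `⊥`. -/
inductive DValue : Type
  | date (y m d : ℤ) : DValue
  | bot : DValue
deriving DecidableEq

/-- `nb_days(y, m)`: the number of days of month `m` in year `y`
(meaningful for `1 ≤ m ≤ 12`). A year is leap iff it is divisible by 4
and not by 100, or divisible by 400. -/
def nbDays (y m : ℤ) : ℤ :=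
  if m = 2 then (if (4 ∣ y ∧ ¬ (100 ∣ y)) ∨ 400 ∣ y then 29 else 28)
  else if m = 4 ∨ m = 6 ∨ m = 9 ∨ m = 11 then 30
  else 31

theorem nbDays_bounds (y m : ℤ) : 28 ≤ nbDays y m ∧ nbDays y m ≤ 31 := by
  unfold nbDays; split_ifs <;> omega

/-- A date `(y, m, d)` is valid iff `1 ≤ m ≤ 12` and `1 ≤ d ≤ nb_days(y, m)`. -/
def ValidDate (y m d : ℤ) : Prop :=
  1 ≤ m ∧ m ≤ 12 ∧ 1 ≤ d ∧ d ≤ nbDays y m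

/-- Year addition: `(y,m,d) +y n = (y+n,m,d)`; `⊥ +y n = ⊥`. -/
def DValue.addY : DValue → ℤ → DValue
  | .date y m d, n => .date (y + n) m d
  | .bot, _ => .bot

/-- Month addition on a date `(y, m, d)` (with `⊥` for a month component
outside `[1,12]`):
`(y,m,d) +m n = (y,m+n,d)` if `1 ≤ m+n ≤ 12`,
`= (y+1,m,d) +m (n−12)` if `m+n > 12`, `= (y−1,m,d) +m (n+12)` if `m+n < 1`. -/
def addMonths (y m d n : ℤ) : DValue :=
  if _h : 1 ≤ m ∧ m ≤ 12 then
    if _h1 : 1 ≤ m + n ∧ m + n ≤ 12 then .date y (m + n) d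
    else if _h2 : 12 < m + n then addMonths (y + 1) m d (n - 12)
    else addMonths (y - 1) m d (n + 12)
  else .bot
termination_by (m + n - 12).toNat + (1 - (m + n)).toNat
decreasing_by all_goals omega

/-- Month addition on values: `⊥ +m n = ⊥`. -/
def DValue.addM : DValue → ℤ → DValue
  | .date y m d, n => addMonths y m d n
  | .bot, _ => .bot

/-- Day addition, following the rules:
for `(y,m,d)` with `1 ≤ d ≤ nb_days(y,m)`:
`(y,m,d) +d n = (y,m,d+n)` if `1 ≤ d+n ≤ nb_days(y,m)`;
`= ((y,m,1) +m 1) +d (n − (nb_days(y,m) − d) − 1)` if `d+n > nb_days(y,m)`;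
`= (y,m,1) +d (d−1+n)` if `d+n ≤ 0` and `d > 1`;
if `n+1 ≤ 0` then, letting `(y',m',d') = (y,m,1) +m (−1)`,
`(y,m,1) +d n = (y',m',1) +d (n + nb_days(y',m'))`.
If `d < 1` or `d > nb_days(y,m)` (or the month is out of range), the result is `⊥`. -/
def addDays (y m d n : ℤ) : DValue :=
  if _hm : 1 ≤ m ∧ m ≤ 12 then
    if _hd : 1 ≤ d ∧ d ≤ nbDays y m then
      if _h1 : 1 ≤ d + n ∧ d + n ≤ nbDays y m then .date y m (d + n)
      else if _h2 : nbDays y m < d + n then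
        match addMonths y m 1 1 with
        | .date y' m' _ => addDays y' m' 1 (n - (nbDays y m - d) - 1)
        | .bot => .bot
      else if _h3 : 1 < d then addDays y m 1 (d - 1 + n)
      else
        match _hprev : addMonths y m 1 (-1) with
        | .date y' m' _ => addDays y' m' 1 (n + nbDays y' m')
        | .bot => .bot
    else .bot
  else .bot
termination_by (if 0 ≤ n then n else 62 - n).toNat
decreasing_by
  · split_ifs <;> omega
  · split_ifs <;> omega
  · have h28 := nbDays_bounds y' m'
    split_ifs <;> omega

/-- Day addition on values: `⊥ +d n = ⊥`. -/
def DValue.addD : DValue → ℤ → DValue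
  | .date y m d, n => addDays y m d n
  | .bot, _ => .bot

/-- Rounding modes: down (`↓`), up (`↑`) and error (`⊥`). -/
inductive RMode : Type
  | down | up | err
deriving DecidableEq

/-- Rounding `rnd_r`: if `1 ≤ d ≤ nb_days(y,m)` then `rnd_r(y,m,d) = (y,m,d)`;
if `d > nb_days(y,m)` then `rnd_↓(y,m,d) = (y,m,nb_days(y,m))`,
`rnd_↑(y,m,d) = (y',m',1)` where `(y',m',d') = (y,m,d) +m 1`, and
`rnd_⊥(y,m,d) = ⊥`; if `d < 1` then `rnd_r(y,m,d) = ⊥`; `rnd_r(⊥) = ⊥`. -/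
def rnd (r : RMode) : DValue → DValue
  | .date y m d =>
    if 1 ≤ d ∧ d ≤ nbDays y m then .date y m d
    else if d < 1 then .bot
    else
      match r with
      | .down => .date y m (nbDays y m)
      | .up =>
        match addMonths y m d 1 with
        | .date y' m' _ => .date y' m' 1
        | .bot => .bot
      | .err => .bot
  | .bot => .bot

/-- A period `(py, pm, pd)`: a number of years, months and days. -/
structure Period : Type where
  py : ℤ
  pm : ℤ
  pd : ℤ
deriving DecidableEq

/-- Derived addition of a period with rounding mode `r`:
`e +r (py, pm, pd) = rnd_r((e +y py) +m pm) +d pd`. -/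
def addPeriod (r : RMode) (e : DValue) (p : Period) : DValue :=
  ((rnd r ((e.addY p.py).addM p.pm)).addD p.pd)

/-- Strict lexicographic order on dates. -/
def DateLt (y1 m1 d1 y2 m2 d2 : ℤ) : Prop :=
  y1 < y2 ∨ (y1 = y2 ∧ (m1 < m2 ∨ (m1 = m2 ∧ d1 < d2)))

/-- Large lexicographic order on dates. -/
def DateLe (y1 m1 d1 y2 m2 d2 : ℤ) : Prop :=
  y1 < y2 ∨ (y1 = y2 ∧ (m1 < m2 ∨ (m1 = m2 ∧ d1 ≤ d2)))

/-- Comparison lifted to values: it holds only between two dates. -/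
def DValue.lt : DValue → DValue → Prop
  | .date y1 m1 d1, .date y2 m2 d2 => DateLt y1 m1 d1 y2 m2 d2
  | _, _ => False

/-- Comparison lifted to values: it holds only between two dates. -/
def DValue.le : DValue → DValue → Prop
  | .date y1 m1 d1, .date y2 m2 d2 => DateLe y1 m1 d1 y2 m2 d2
  | _, _ => False

/-- A value is a valid date: it is not `⊥` and its components are valid. -/
def IsValidDate : DValue → Prop
  | .date y m d => ValidDate y m d
  | .bot => False

def yearOf : DValue → ℤ
  | .date y _ _ => y
  | .bot => 0

def monthOf : DValue → ℤ
  | .date _ m _ => m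
  | .bot => 0

def dayOf : DValue → ℤ
  | .date _ _ d => d
  | .bot => 0

/-- Date units: year, month, day. -/
inductive DUnit : Type
  | year | month | day
deriving DecidableEq

/-- Addition of `n` units to a value. -/
def addU : DUnit → DValue → ℤ → DValue
  | .year, v, n => v.addY n
  | .month, v, n => v.addM n
  | .day, v, n => v.addD n

/-- Componentwise addition of periods. -/
def Period.add (p q : Period) : Period :=
  ⟨p.py + q.py, p.pm + q.pm, p.pd + q.pd⟩

/-! Rounding leaves a day that fits its month unchanged. Any other day `d ≥ 1` lies past the end of
the month and is replaced by the last day of that month or by the first day of the next one. Both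
exist because every month has at least one day, and the next month is again in `[1, 12]` because
month addition is division with remainder by `12` on months counted from `0`. -/

section

variable {y m d : ℤ}

theorem validDate_first_day (hm1 : 1 ≤ m) (hm2 : m ≤ 12) : ValidDate y m 1 :=
  ⟨hm1, hm2, le_rfl, by linarith [(nbDays_bounds y m).1]⟩

theorem validDate_last_day (hm1 : 1 ≤ m) (hm2 : m ≤ 12) : ValidDate y m (nbDays y m) :=
  ⟨hm1, hm2, by linarith [(nbDays_bounds y m).1], le_rfl⟩

theorem addMonths_eq_date_ediv_emod (hm1 : 1 ≤ m) (hm2 : m ≤ 12) (n : ℤ) :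
    addMonths y m d n = .date (y + (m + n - 1) / 12) ((m + n - 1) % 12 + 1) d := by
  fun_induction addMonths y m d n with
  | case1 y n =>
    rw [DValue.date.injEq]
    omega
  | case2 y n _ _ _ ih =>
    rw [ih, DValue.date.injEq]
    omega
  | case3 y n _ _ _ ih =>
    rw [ih, DValue.date.injEq]
    omega
  | case4 y n hm => exact absurd ⟨hm1, hm2⟩ hm

theorem rnd_date_of_le_nbDays (r : RMode) (hd : 1 ≤ d) (hle : d ≤ nbDays y m) :
    rnd r (.date y m d) = .date y m d :=
  if_pos ⟨hd, hle⟩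

theorem rnd_down_date_of_nbDays_lt (hlt : nbDays y m < d) :
    rnd .down (.date y m d) = .date y m (nbDays y m) := by
  have hd : ¬ d < 1 := by linarith [(nbDays_bounds y m).1]
  simp only [rnd, hlt.not_ge, and_false, if_false, hd]

theorem rnd_up_date_of_nbDays_lt (hm1 : 1 ≤ m) (hm2 : m ≤ 12) (hlt : nbDays y m < d) :
    rnd .up (.date y m d) = .date (y + m / 12) (m % 12 + 1) 1 := by
  have hd : ¬ d < 1 := by linarith [(nbDays_bounds y m).1]
  simp only [rnd, hlt.not_ge, and_false, if_false, hd, addMonths_eq_date_ediv_emod hm1 hm2,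
    add_sub_cancel_right]

end

/-- **Well-formedness of rounding**: for every triple `(y, m, d)` with
`1 ≤ m ≤ 12` and `d ≥ 1`, and every rounding mode `r ∈ {↓, ↑}`, the value
`rnd_r(y, m, d)` is a valid date. -/
theorem wellFormedness_rounding (y m d : ℤ) (hm1 : 1 ≤ m) (hm2 : m ≤ 12)
    (hd : 1 ≤ d) (r : RMode) (hr : r = RMode.down ∨ r = RMode.up) :
    IsValidDate (rnd r (DValue.date y m d)) := by
  obtain hle | hlt := le_or_gt d (nbDays y m)
  · rw [rnd_date_of_le_nbDays r hd hle]
    exact ⟨hm1, hm2, hd, hle⟩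
  · obtain rfl | rfl := hr
    · rw [rnd_down_date_of_nbDays_lt hlt]
      exact validDate_last_day hm1 hm2
    · rw [rnd_up_date_of_nbDays_lt hm1 hm2 hlt]
      exact validDate_first_day (by omega) (by omega)
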